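/- There exists a universal constant C > 0 such that the following holds. Assume μ ≥ μ_h, 0 < ε ≤ 1/15, L ≥ C·μ²·s·(K+N)·(log L)², that the Local RIP holds, that the rank-one bound holds, and that |‖𝒜(P_T(Z))‖² − ‖P_T(Z)‖_F²| ≤ (1/10)‖Z‖_F² for every block-diagonal Z. Then for every (h,x) ∈ 𝒩_d ∩ 𝒩_μ ∩ 𝒩_ε: Re(⟨∇F_h(h,x), Δh⟩ + ⟨∇F_x(h,x), Δx⟩) ≥ δ²d_0²/8 − 2√s·δ·d_0·‖𝒜*(e)‖. -/

import Mathlib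

noncomputable section
open Finset ComplexConjugate

namespace RGD

/-- Squared Euclidean norm of a complex vector. -/
def vnormSq {n : ℕ} (v : Fin n → ℂ) : ℝ := ∑ j, ‖v j‖ ^ 2

/-- Euclidean norm of a complex vector. -/
def vnorm {n : ℕ} (v : Fin n → ℂ) : ℝ := Real.sqrt (vnormSq v)

/-- Inner product, conjugate-linear in the first argument. -/
def vinner {n : ℕ} (u v : Fin n → ℂ) : ℂ := ∑ j, conj (u j) * v j

/-- Squared Frobenius norm of a matrix. -/
def frobSq {K N : ℕ} (Z : Matrix (Fin K) (Fin N) ℂ) : ℝ := ∑ k, ∑ j, ‖Z k j‖ ^ 2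

/-- Frobenius norm of a matrix. -/
def frob {K N : ℕ} (Z : Matrix (Fin K) (Fin N) ℂ) : ℝ := Real.sqrt (frobSq Z)

/-- Frobenius inner product `⟨U,V⟩ = Tr(U*V)`, conjugate-linear in the first argument. -/
def finner {K N : ℕ} (U V : Matrix (Fin K) (Fin N) ℂ) : ℂ := ∑ k, ∑ j, conj (U k j) * V k j

/-- Spectral (operator) norm of a matrix: sup of `‖Zv‖` over the closed unit ball. -/
def opNorm {K N : ℕ} (Z : Matrix (Fin K) (Fin N) ℂ) : ℝ :=
  sSup {r : ℝ | ∃ v : Fin N → ℂ, vnorm v ≤ 1 ∧ r = vnorm (Z.mulVec v)}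

/-- Squared Frobenius norm of a block-diagonal matrix, given by its diagonal blocks. -/
def famFrobSq {K N s : ℕ} (Z : Fin s → Matrix (Fin K) (Fin N) ℂ) : ℝ := ∑ i, frobSq (Z i)

/-- Frobenius norm of a block-diagonal matrix, given by its diagonal blocks. -/
def famFrob {K N s : ℕ} (Z : Fin s → Matrix (Fin K) (Fin N) ℂ) : ℝ := Real.sqrt (famFrobSq Z)

/-- The rank-one matrix `u v*`. -/
def rankOne {K N : ℕ} (u : Fin K → ℂ) (v : Fin N → ℂ) : Matrix (Fin K) (Fin N) ℂ :=
  Matrix.of fun k j => u k * conj (v j)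

/-- `ℋ(h,x)`: block-diagonal matrix with `i`-th block `hᵢ xᵢ*`. -/
def Hmap {K N s : ℕ} (h : Fin s → Fin K → ℂ) (x : Fin s → Fin N → ℂ) :
    Fin s → Matrix (Fin K) (Fin N) ℂ := fun i => rankOne (h i) (x i)

/-- `𝒜ᵢ(Z) = (bₗ* Z aₗ)ₗ`. -/
def calAi {K N L : ℕ} (b : Fin L → Fin K → ℂ) (a : Fin L → Fin N → ℂ)
    (Z : Matrix (Fin K) (Fin N) ℂ) : Fin L → ℂ :=
  fun l => vinner (b l) (Z.mulVec (a l))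

/-- `𝒜(Z) = Σᵢ 𝒜ᵢ(Zᵢ)` on block-diagonal matrices. -/
def calA {K N L s : ℕ} (b : Fin L → Fin K → ℂ) (a : Fin s → Fin L → Fin N → ℂ)
    (Z : Fin s → Matrix (Fin K) (Fin N) ℂ) : Fin L → ℂ :=
  fun l => ∑ i, calAi b (a i) (Z i) l

/-- `𝒜ᵢ*(z) = Σₗ zₗ bₗ aₗ*`. -/
def calAdj {K N L : ℕ} (b : Fin L → Fin K → ℂ) (a : Fin L → Fin N → ℂ)
    (z : Fin L → ℂ) : Matrix (Fin K) (Fin N) ℂ :=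
  Matrix.of fun k j => ∑ l, z l * b l k * conj (a l j)

/-- `‖𝒜*(e)‖ = maxᵢ ‖𝒜ᵢ*(e)‖` (operator norms). -/
def AadjNorm {K N L s : ℕ} (b : Fin L → Fin K → ℂ) (a : Fin s → Fin L → Fin N → ℂ)
    (e : Fin L → ℂ) : ℝ :=
  ⨆ i : Fin s, opNorm (calAdj b (a i) e)

/-- `B*B = I_K`, expressed in terms of the columns `bₗ` of `B*`. -/
def BtBeqI {K L : ℕ} (b : Fin L → Fin K → ℂ) : Prop :=
  ∀ k k' : Fin K, (∑ l, b l k * conj (b l k')) = if k = k' then (1 : ℂ) else 0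

/-- `μ ≥ μ_h`, i.e. `√L ‖B h_{i0}‖_∞ ≤ μ ‖h_{i0}‖` for all `i`. -/
def muhLe {K L s : ℕ} (b : Fin L → Fin K → ℂ) (h0 : Fin s → Fin K → ℂ) (μ : ℝ) : Prop :=
  ∀ i l, Real.sqrt L * ‖vinner (b l) (h0 i)‖ ≤ μ * vnorm (h0 i)

/-- `d₀ = √(Σᵢ d_{i0}²)`. -/
def dtot {s : ℕ} (d0 : Fin s → ℝ) : ℝ := Real.sqrt (∑ i, d0 i ^ 2)

/-- Condition number `κ = (maxᵢ d_{i0}) / (minᵢ d_{i0})`. -/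
def kappa {s : ℕ} (d0 : Fin s → ℝ) : ℝ := (⨆ i, d0 i) / (⨅ i, d0 i)

/-- The observation `y = 𝒜(ℋ(h₀,x₀)) + e`. -/
def yvec {K N L s : ℕ} (b : Fin L → Fin K → ℂ) (a : Fin s → Fin L → Fin N → ℂ)
    (h0 : Fin s → Fin K → ℂ) (x0 : Fin s → Fin N → ℂ) (e : Fin L → ℂ) : Fin L → ℂ :=
  fun l => calA b a (Hmap h0 x0) l + e l

/-- `F(h,x) = ‖𝒜(ℋ(h,x)) − y‖²`. -/
def Fobj {K N L s : ℕ} (b : Fin L → Fin K → ℂ) (a : Fin s → Fin L → Fin N → ℂ)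
    (h0 : Fin s → Fin K → ℂ) (x0 : Fin s → Fin N → ℂ) (e : Fin L → ℂ)
    (h : Fin s → Fin K → ℂ) (x : Fin s → Fin N → ℂ) : ℝ :=
  vnormSq (fun l => calA b a (Hmap h x) l - yvec b a h0 x0 e l)

def G0 (z : ℝ) : ℝ := max (z - 1) 0 ^ 2

def G0' (z : ℝ) : ℝ := 2 * max (z - 1) 0

/-- The `i`-th regularizer `Gᵢ(hᵢ,xᵢ)` (including the factor `ρ`). -/
def Gi {K N L : ℕ} (b : Fin L → Fin K → ℂ) (ρ μ di : ℝ)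
    (hi : Fin K → ℂ) (xi : Fin N → ℂ) : ℝ :=
  ρ * (G0 (vnormSq hi / (2 * di)) + G0 (vnormSq xi / (2 * di))
    + ∑ l, G0 ((L : ℝ) * ‖vinner (b l) hi‖ ^ 2 / (8 * di * μ ^ 2)))

/-- The regularizer `G(h,x) = Σᵢ Gᵢ(hᵢ,xᵢ)`. -/
def Greg {K N L s : ℕ} (b : Fin L → Fin K → ℂ) (ρ μ : ℝ) (dd : Fin s → ℝ)
    (h : Fin s → Fin K → ℂ) (x : Fin s → Fin N → ℂ) : ℝ :=
  ∑ i, Gi b ρ μ (dd i) (h i) (x i)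

/-- `F̃ = F + G`. -/
def Ftil {K N L s : ℕ} (b : Fin L → Fin K → ℂ) (a : Fin s → Fin L → Fin N → ℂ)
    (h0 : Fin s → Fin K → ℂ) (x0 : Fin s → Fin N → ℂ) (e : Fin L → ℂ)
    (ρ μ : ℝ) (dd : Fin s → ℝ)
    (h : Fin s → Fin K → ℂ) (x : Fin s → Fin N → ℂ) : ℝ :=
  Fobj b a h0 x0 e h x + Greg b ρ μ dd h x

/-- The residual `𝒜(ℋ(h,x)) − y`. -/
def residual {K N L s : ℕ} (b : Fin L → Fin K → ℂ) (a : Fin s → Fin L → Fin N → ℂ)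
    (h0 : Fin s → Fin K → ℂ) (x0 : Fin s → Fin N → ℂ) (e : Fin L → ℂ)
    (h : Fin s → Fin K → ℂ) (x : Fin s → Fin N → ℂ) : Fin L → ℂ :=
  fun l => calA b a (Hmap h x) l - yvec b a h0 x0 e l

/-- Wirtinger gradient `∇F_{hᵢ} = 𝒜ᵢ*(𝒜(ℋ(h,x)) − y) xᵢ`. -/
def gradFh {K N L s : ℕ} (b : Fin L → Fin K → ℂ) (a : Fin s → Fin L → Fin N → ℂ)
    (h0 : Fin s → Fin K → ℂ) (x0 : Fin s → Fin N → ℂ) (e : Fin L → ℂ)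
    (h : Fin s → Fin K → ℂ) (x : Fin s → Fin N → ℂ) (i : Fin s) : Fin K → ℂ :=
  (calAdj b (a i) (residual b a h0 x0 e h x)).mulVec (x i)

/-- Wirtinger gradient `∇F_{xᵢ} = (𝒜ᵢ*(𝒜(ℋ(h,x)) − y))* hᵢ`. -/
def gradFx {K N L s : ℕ} (b : Fin L → Fin K → ℂ) (a : Fin s → Fin L → Fin N → ℂ)
    (h0 : Fin s → Fin K → ℂ) (x0 : Fin s → Fin N → ℂ) (e : Fin L → ℂ)
    (h : Fin s → Fin K → ℂ) (x : Fin s → Fin N → ℂ) (i : Fin s) : Fin N → ℂ :=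
  (calAdj b (a i) (residual b a h0 x0 e h x)).conjTranspose.mulVec (h i)

/-- Wirtinger gradient `∇G_{hᵢ}`. -/
def gradGh {K L s : ℕ} (b : Fin L → Fin K → ℂ) (ρ μ : ℝ) (dd : Fin s → ℝ)
    (h : Fin s → Fin K → ℂ) (i : Fin s) : Fin K → ℂ :=
  fun k => ((ρ / (2 * dd i) : ℝ) : ℂ) *
    (((G0' (vnormSq (h i) / (2 * dd i)) : ℝ) : ℂ) * h i k
      + (((L : ℝ) / (4 * μ ^ 2) : ℝ) : ℂ) *
        ∑ l, ((G0' ((L : ℝ) * ‖vinner (b l) (h i)‖ ^ 2 / (8 * dd i * μ ^ 2)) : ℝ) : ℂ)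
          * (vinner (b l) (h i) * b l k))

/-- Wirtinger gradient `∇G_{xᵢ}`. -/
def gradGx {N s : ℕ} (ρ : ℝ) (dd : Fin s → ℝ)
    (x : Fin s → Fin N → ℂ) (i : Fin s) : Fin N → ℂ :=
  fun j => ((ρ / (2 * dd i) : ℝ) : ℂ) * (((G0' (vnormSq (x i) / (2 * dd i)) : ℝ) : ℂ) * x i j)

/-- `∇F̃_{hᵢ} = ∇F_{hᵢ} + ∇G_{hᵢ}`. -/
def gradH {K N L s : ℕ} (b : Fin L → Fin K → ℂ) (a : Fin s → Fin L → Fin N → ℂ)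
    (h0 : Fin s → Fin K → ℂ) (x0 : Fin s → Fin N → ℂ) (e : Fin L → ℂ)
    (ρ μ : ℝ) (dd : Fin s → ℝ)
    (h : Fin s → Fin K → ℂ) (x : Fin s → Fin N → ℂ) (i : Fin s) : Fin K → ℂ :=
  fun k => gradFh b a h0 x0 e h x i k + gradGh b ρ μ dd h i k

/-- `∇F̃_{xᵢ} = ∇F_{xᵢ} + ∇G_{xᵢ}`. -/
def gradX {K N L s : ℕ} (b : Fin L → Fin K → ℂ) (a : Fin s → Fin L → Fin N → ℂ)
    (h0 : Fin s → Fin K → ℂ) (x0 : Fin s → Fin N → ℂ) (e : Fin L → ℂ)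
    (ρ μ : ℝ) (dd : Fin s → ℝ)
    (h : Fin s → Fin K → ℂ) (x : Fin s → Fin N → ℂ) (i : Fin s) : Fin N → ℂ :=
  fun j => gradFx b a h0 x0 e h x i j + gradGx ρ dd x i j

/-- `‖∇F̃(h,x)‖²` (squared norm of the stacked Wirtinger gradient). -/
def gradNormSq {K N L s : ℕ} (b : Fin L → Fin K → ℂ) (a : Fin s → Fin L → Fin N → ℂ)
    (h0 : Fin s → Fin K → ℂ) (x0 : Fin s → Fin N → ℂ) (e : Fin L → ℂ)
    (ρ μ : ℝ) (dd : Fin s → ℝ)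
    (h : Fin s → Fin K → ℂ) (x : Fin s → Fin N → ℂ) : ℝ :=
  ∑ i, vnormSq (gradH b a h0 x0 e ρ μ dd h x i) + ∑ i, vnormSq (gradX b a h0 x0 e ρ μ dd h x i)

/-- `‖∇F̃(h',x') − ∇F̃(h,x)‖²`. -/
def gradDiffNormSq {K N L s : ℕ} (b : Fin L → Fin K → ℂ) (a : Fin s → Fin L → Fin N → ℂ)
    (h0 : Fin s → Fin K → ℂ) (x0 : Fin s → Fin N → ℂ) (e : Fin L → ℂ)
    (ρ μ : ℝ) (dd : Fin s → ℝ)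
    (h : Fin s → Fin K → ℂ) (x : Fin s → Fin N → ℂ)
    (h' : Fin s → Fin K → ℂ) (x' : Fin s → Fin N → ℂ) : ℝ :=
  ∑ i, vnormSq (fun k => gradH b a h0 x0 e ρ μ dd h' x' i k - gradH b a h0 x0 e ρ μ dd h x i k)
  + ∑ i, vnormSq (fun j => gradX b a h0 x0 e ρ μ dd h' x' i j - gradX b a h0 x0 e ρ μ dd h x i j)

/-- Membership in `𝒩_d`. -/
def inNd {K N s : ℕ} (d0 : Fin s → ℝ)
    (h : Fin s → Fin K → ℂ) (x : Fin s → Fin N → ℂ) : Prop :=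
  ∀ i, vnorm (h i) ≤ 2 * Real.sqrt (d0 i) ∧ vnorm (x i) ≤ 2 * Real.sqrt (d0 i)

/-- Membership in `𝒩_μ`. -/
def inNmu {K L s : ℕ} (b : Fin L → Fin K → ℂ) (d0 : Fin s → ℝ) (μ : ℝ)
    (h : Fin s → Fin K → ℂ) : Prop :=
  ∀ i, ∀ l, Real.sqrt L * ‖vinner (b l) (h i)‖ ≤ 4 * Real.sqrt (d0 i) * μ

/-- `δᵢ(hᵢ,xᵢ) = ‖hᵢxᵢ* − h_{i0}x_{i0}*‖_F / d_{i0}`. -/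
def deltaI {K N : ℕ} (h0i : Fin K → ℂ) (x0i : Fin N → ℂ) (d0i : ℝ)
    (hi : Fin K → ℂ) (xi : Fin N → ℂ) : ℝ :=
  frob (rankOne hi xi - rankOne h0i x0i) / d0i

/-- Membership in `𝒩_ε`. -/
def inNeps {K N s : ℕ} (h0 : Fin s → Fin K → ℂ) (x0 : Fin s → Fin N → ℂ)
    (d0 : Fin s → ℝ) (ε : ℝ)
    (h : Fin s → Fin K → ℂ) (x : Fin s → Fin N → ℂ) : Prop :=
  ∀ i, deltaI (h0 i) (x0 i) (d0 i) (h i) (x i) ≤ ε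

/-- The global relative error `δ(h,x) = ‖ℋ(h,x) − X₀‖_F / d₀`. -/
def deltaTot {K N s : ℕ} (h0 : Fin s → Fin K → ℂ) (x0 : Fin s → Fin N → ℂ)
    (d0 : Fin s → ℝ)
    (h : Fin s → Fin K → ℂ) (x : Fin s → Fin N → ℂ) : ℝ :=
  famFrob (fun i => Hmap h x i - Hmap h0 x0 i) / dtot d0

/-- Membership in `𝒩_F̃`. -/
def inNF {K N L s : ℕ} (b : Fin L → Fin K → ℂ) (a : Fin s → Fin L → Fin N → ℂ)
    (h0 : Fin s → Fin K → ℂ) (x0 : Fin s → Fin N → ℂ) (e : Fin L → ℂ)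
    (d0 : Fin s → ℝ) (ρ μ : ℝ) (dd : Fin s → ℝ) (ε : ℝ)
    (h : Fin s → Fin K → ℂ) (x : Fin s → Fin N → ℂ) : Prop :=
  Ftil b a h0 x0 e ρ μ dd h x ≤ ε ^ 2 * dtot d0 ^ 2 / (3 * (s : ℝ) * kappa d0 ^ 2) + vnormSq e

/-- The Local Restricted Isometry Property on `𝒩_d ∩ 𝒩_μ ∩ 𝒩_ε`. -/
def LocalRIP {K N L s : ℕ} (b : Fin L → Fin K → ℂ) (a : Fin s → Fin L → Fin N → ℂ)
    (h0 : Fin s → Fin K → ℂ) (x0 : Fin s → Fin N → ℂ)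
    (d0 : Fin s → ℝ) (μ ε : ℝ) : Prop :=
  ∀ (h : Fin s → Fin K → ℂ) (x : Fin s → Fin N → ℂ),
    inNd d0 h x → inNmu b d0 μ h → inNeps h0 x0 d0 ε h x →
      (2 / 3) * famFrobSq (fun i => Hmap h x i - Hmap h0 x0 i)
          ≤ vnormSq (calA b a fun i => Hmap h x i - Hmap h0 x0 i)
      ∧ vnormSq (calA b a fun i => Hmap h x i - Hmap h0 x0 i)
          ≤ (3 / 2) * famFrobSq (fun i => Hmap h x i - Hmap h0 x0 i)

/-- `α_{i1} = ⟨h_{i0}, hᵢ⟩ / d_{i0}`. -/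
def alpha1 {K s : ℕ} (h0 : Fin s → Fin K → ℂ) (d0 : Fin s → ℝ)
    (h : Fin s → Fin K → ℂ) (i : Fin s) : ℂ :=
  vinner (h0 i) (h i) / ((d0 i : ℝ) : ℂ)

/-- `α_{i2} = ⟨x_{i0}, xᵢ⟩ / d_{i0}`. -/
def alpha2 {N s : ℕ} (x0 : Fin s → Fin N → ℂ) (d0 : Fin s → ℝ)
    (x : Fin s → Fin N → ℂ) (i : Fin s) : ℂ :=
  vinner (x0 i) (x i) / ((d0 i : ℝ) : ℂ)

/-- `δ₀ = δ/10`. -/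
def delta0 {K N s : ℕ} (h0 : Fin s → Fin K → ℂ) (x0 : Fin s → Fin N → ℂ)
    (d0 : Fin s → ℝ) (h : Fin s → Fin K → ℂ) (x : Fin s → Fin N → ℂ) : ℝ :=
  deltaTot h0 x0 d0 h x / 10

/-- `αᵢ = (1−δ₀)α_{i1}` if `‖hᵢ‖ ≥ ‖xᵢ‖`, else `1/((1−δ₀) conj(α_{i2}))`. -/
def alphaC {K N s : ℕ} (h0 : Fin s → Fin K → ℂ) (x0 : Fin s → Fin N → ℂ)
    (d0 : Fin s → ℝ) (h : Fin s → Fin K → ℂ) (x : Fin s → Fin N → ℂ) (i : Fin s) : ℂ :=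
  if vnorm (x i) ≤ vnorm (h i)
  then ((1 - delta0 h0 x0 d0 h x : ℝ) : ℂ) * alpha1 h0 d0 h i
  else 1 / (((1 - delta0 h0 x0 d0 h x : ℝ) : ℂ) * conj (alpha2 x0 d0 x i))

/-- `Δhᵢ = hᵢ − αᵢ h_{i0}`. -/
def dh {K N s : ℕ} (h0 : Fin s → Fin K → ℂ) (x0 : Fin s → Fin N → ℂ)
    (d0 : Fin s → ℝ) (h : Fin s → Fin K → ℂ) (x : Fin s → Fin N → ℂ) (i : Fin s) :
    Fin K → ℂ :=
  fun k => h i k - alphaC h0 x0 d0 h x i * h0 i k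

/-- `Δxᵢ = xᵢ − conj(αᵢ)⁻¹ x_{i0}`. -/
def dx {K N s : ℕ} (h0 : Fin s → Fin K → ℂ) (x0 : Fin s → Fin N → ℂ)
    (d0 : Fin s → ℝ) (h : Fin s → Fin K → ℂ) (x : Fin s → Fin N → ℂ) (i : Fin s) :
    Fin N → ℂ :=
  fun j => x i j - (conj (alphaC h0 x0 d0 h x i))⁻¹ * x0 i j

/-- `σ²_max(h,x) = maxₗ Σᵢ |bₗ*hᵢ|² ‖xᵢ‖²`. -/
def sigmaMaxSq {K N L s : ℕ} (b : Fin L → Fin K → ℂ)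
    (h : Fin s → Fin K → ℂ) (x : Fin s → Fin N → ℂ) : ℝ :=
  ⨆ l : Fin L, ∑ i, ‖vinner (b l) (h i)‖ ^ 2 * vnormSq (x i)

/-- The rank-one bound (Lemma: `𝒜` on block-diagonal matrices with rank-1 blocks). -/
def RankOneBound {K N L s : ℕ} (b : Fin L → Fin K → ℂ)
    (a : Fin s → Fin L → Fin N → ℂ) : Prop :=
  ∀ (h : Fin s → Fin K → ℂ) (x : Fin s → Fin N → ℂ),
    vnormSq (calA b a (Hmap h x)) ≤
      4 / 3 * famFrobSq (Hmap h x)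
      + 2 * Real.sqrt (2 * (s : ℝ) * famFrobSq (Hmap h x) * sigmaMaxSq b h x
          * ((K : ℝ) + N) * Real.log L)
      + 8 * (s : ℝ) * sigmaMaxSq b h x * ((K : ℝ) + N) * Real.log L

/-- The subspace `Tᵢ = {h_{i0} v* + u x_{i0}*}`. -/
def Tspace {K N : ℕ} (h0i : Fin K → ℂ) (x0i : Fin N → ℂ) :
    Set (Matrix (Fin K) (Fin N) ℂ) :=
  {Z | ∃ (u : Fin K → ℂ) (v : Fin N → ℂ), Z = rankOne h0i v + rankOne u x0i}

/-- `P` is the orthogonal projection onto `Tᵢ` w.r.t. the Frobenius inner product. -/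
def IsFrobProj {K N : ℕ} (h0i : Fin K → ℂ) (x0i : Fin N → ℂ)
    (P : Matrix (Fin K) (Fin N) ℂ → Matrix (Fin K) (Fin N) ℂ) : Prop :=
  ∀ Z, P Z ∈ Tspace h0i x0i ∧ ∀ W ∈ Tspace h0i x0i, finner W (Z - P Z) = 0

/-- Operator norm of `𝒜ᵢ` from `(ℂ^{K×N}, ‖·‖_F)` to `(ℂ^L, ‖·‖)`. -/
def calAiOpNorm {K N L : ℕ} (b : Fin L → Fin K → ℂ) (a : Fin L → Fin N → ℂ) : ℝ :=
  sSup {r : ℝ | ∃ Z : Matrix (Fin K) (Fin N) ℂ, frob Z ≤ 1 ∧ r = vnorm (calAi b a Z)}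

/-- Operator norm of `𝒜` from block-diagonal matrices with `‖·‖_F` to `ℂ^L`. -/
def calAOpNorm {K N L s : ℕ} (b : Fin L → Fin K → ℂ)
    (a : Fin s → Fin L → Fin N → ℂ) : ℝ :=
  sSup {r : ℝ | ∃ Z : Fin s → Matrix (Fin K) (Fin N) ℂ, famFrob Z ≤ 1 ∧ r = vnorm (calA b a Z)}

/-- Norm of a stacked vector in `ℂ^{ns}`. -/
def stackNorm {n s : ℕ} (u : Fin s → Fin n → ℂ) : ℝ := Real.sqrt (∑ i, vnormSq (u i))

/-- Norm of a point `z = (h,x) ∈ ℂ^{s(K+N)}`. -/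
def pairNorm {K N s : ℕ} (u : Fin s → Fin K → ℂ) (v : Fin s → Fin N → ℂ) : ℝ :=
  Real.sqrt (∑ i, vnormSq (u i) + ∑ i, vnormSq (v i))

/-- `z + t • w` componentwise, `t` real. -/
def shiftV {n s : ℕ} (u w : Fin s → Fin n → ℂ) (t : ℝ) : Fin s → Fin n → ℂ :=
  fun i k => u i k + (t : ℂ) * w i k

/-- `σ_max(h) = maxₗ √(Σᵢ |bₗ*hᵢ|²)` (unit `xᵢ`'s). -/
def sigmaMaxU {K L s : ℕ} (b : Fin L → Fin K → ℂ) (h : Fin s → Fin K → ℂ) : ℝ :=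
  ⨆ l, Real.sqrt (∑ i, ‖vinner (b l) (h i)‖ ^ 2)

section Geometry

variable {E F : Type*} [NormedAddCommGroup E] [InnerProductSpace ℂ E]
  [NormedAddCommGroup F] [InnerProductSpace ℂ F]

/-- Splitting `h` along `h₀` decomposes the squared Frobenius distance between
`h x*` and `h₀ x₀*` into two orthogonal parts. -/
lemma orthogonal_split {r : ℝ} (hr : 0 < r) {h h0 : E} {x x0 : F}
    (hh0 : ‖h0‖ = r) (hx0 : ‖x0‖ = r) (c : ℂ) (hc : c = inner ℂ h0 h / ((r ^ 2 : ℝ) : ℂ)) :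
    ‖h - c • h0‖ ^ 2 * ‖x‖ ^ 2 + r ^ 2 * ‖conj c • x - x0‖ ^ 2
      = ‖h‖ ^ 2 * ‖x‖ ^ 2 + r ^ 2 * r ^ 2
        - 2 * (inner ℂ h0 h * inner ℂ x x0 : ℂ).re := by
  have hr2 : ((r ^ 2 : ℝ) : ℂ) ≠ 0 := by
    exact_mod_cast (pow_pos hr 2).ne'
  have hi : (inner ℂ h0 h : ℂ) = ((r ^ 2 : ℝ) : ℂ) * c := by
    rw [hc]; field_simp
  have hi' : (inner ℂ h h0 : ℂ) = ((r ^ 2 : ℝ) : ℂ) * conj c := by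
    rw [← inner_conj_symm, hi, map_mul, Complex.conj_ofReal]
  have e1 : ‖h - c • h0‖ ^ 2 = ‖h‖ ^ 2 - r ^ 2 * ‖c‖ ^ 2 := by
    rw [@norm_sub_sq ℂ, inner_smul_right, hi', norm_smul, hh0, mul_left_comm, Complex.mul_conj]
    rw [Complex.normSq_eq_norm_sq, ← Complex.ofReal_mul]
    simp only [RCLike.re_to_complex, Complex.ofReal_re]
    ring
  have e2 : ‖conj c • x - x0‖ ^ 2
      = ‖c‖ ^ 2 * ‖x‖ ^ 2 - 2 * (c * inner ℂ x x0 : ℂ).re + r ^ 2 := by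
    rw [@norm_sub_sq ℂ, inner_smul_left, norm_smul, hx0]
    simp only [RCLike.re_to_complex, Complex.conj_conj, RCLike.norm_conj]
    ring
  rw [e1, e2, hi, mul_assoc, Complex.re_ofReal_mul]
  ring

set_option maxHeartbeats 1000000 in
/-- Size of the two increments when `h` is rescaled by a slightly shrunk projection coefficient. -/
lemma increment_bounds {r D t : ℝ} (hr : 0 < r) {h h0 : E} {x x0 : F}
    (hh0 : ‖h0‖ = r) (hx0 : ‖x0‖ = r) (hh : ‖h‖ ≤ 2 * r) (hxh : ‖x‖ ≤ ‖h‖)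
    (hD : 0 ≤ D) (hD' : D ≤ 1 / 15) (ht : 0 ≤ t) (ht' : t ≤ 1 / 150)
    (hQ : ‖h‖ ^ 2 * ‖x‖ ^ 2 + r ^ 2 * r ^ 2 - 2 * (inner ℂ h0 h * inner ℂ x x0 : ℂ).re
      ≤ (D * r ^ 2) ^ 2)
    (β : ℂ) (hβ : β = ((1 - t : ℝ) : ℂ) * (inner ℂ h0 h / ((r ^ 2 : ℝ) : ℂ))) :
    β ≠ 0 ∧ ‖β‖ ≤ 2 ∧ ‖β⁻¹‖ ≤ 2 ∧ ‖h - β • h0‖ ≤ (2.15 * D + 2 * t) * r ∧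
      ‖x - (conj β)⁻¹ • x0‖ ≤ (1.14 * D + 1.22 * t) * r := by
  set c : ℂ := inner ℂ h0 h / ((r ^ 2 : ℝ) : ℂ) with hc
  have hsplit := orthogonal_split hr hh0 hx0 c hc (x := x)
  set g := ‖h - c • h0‖ with hg
  set y := ‖conj c • x - x0‖ with hy
  have hg0 : 0 ≤ g := norm_nonneg _
  have hy0 : 0 ≤ y := norm_nonneg _
  have hX0 : 0 ≤ ‖x‖ := norm_nonneg _
  have hc0 : 0 ≤ ‖c‖ := norm_nonneg _
  have hgX : g * ‖x‖ ≤ D * r ^ 2 := by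
    apply abs_le_of_sq_le_sq' _ (by positivity) |>.2
    nlinarith [sq_nonneg (r * y)]
  have hyD : y ≤ D * r := by
    have : r * y ≤ D * r ^ 2 := by
      apply abs_le_of_sq_le_sq' _ (by positivity) |>.2
      nlinarith [sq_nonneg (g * ‖x‖)]
    nlinarith
  have hcX : ‖conj c • x‖ = ‖c‖ * ‖x‖ := by rw [norm_smul, RCLike.norm_conj]
  have hup : ‖c‖ * ‖x‖ ≤ (1 + D) * r := by
    have := norm_add_le (conj c • x - x0) x0
    rw [sub_add_cancel, hcX, hx0] at this
    linarith
  have hlo : (1 - D) * r ≤ ‖c‖ * ‖x‖ := by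
    have := norm_sub_norm_le x0 (conj c • x)
    rw [hcX, hx0, norm_sub_rev] at this
    linarith
  have hcr : ‖c‖ * r ≤ ‖h‖ := by
    have := norm_inner_le_norm (𝕜 := ℂ) h0 h
    rw [hc, norm_div, Complex.norm_real, Real.norm_of_nonneg (by positivity)]
    rw [hh0] at this
    rw [div_mul_eq_mul_div, div_le_iff₀ (by positivity)]
    nlinarith
  have hc2 : ‖c‖ ≤ 2 := by nlinarith
  have hXlo : 7 / 15 * r ≤ ‖x‖ := by nlinarith
  have hgD : g ≤ 15 / 7 * D * r := by
    by_contra! hcon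
    have : 15 / 7 * D * r * (7 / 15 * r) < g * ‖x‖ :=
      mul_lt_mul hcon hXlo (by positivity) hg0
    nlinarith
  have hHle : ‖h‖ ≤ ‖c‖ * r + g := by
    have := norm_add_le (c • h0) (h - c • h0)
    rwa [add_sub_cancel, norm_smul, hh0] at this
  have hclo : 0.89 ≤ ‖c‖ := by
    by_contra! hcon
    have h1 : ‖x‖ ≤ ‖c‖ * r + r / 7 := by nlinarith
    have h2 : ‖c‖ * ‖x‖ ≤ ‖c‖ * (‖c‖ * r + r / 7) := mul_le_mul_of_nonneg_left h1 hc0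
    have h3 : ‖c‖ * (‖c‖ * r + r / 7) ≤ 0.89 * (0.89 * r + r / 7) := by gcongr
    nlinarith
  have hβn : ‖β‖ = (1 - t) * ‖c‖ := by
    rw [hβ, norm_mul, Complex.norm_real, Real.norm_of_nonneg (by linarith)]
  have hβlo : 0.884 ≤ ‖β‖ := by
    rw [hβn]
    calc (0.884 : ℝ) ≤ 149 / 150 * 0.89 := by norm_num
      _ ≤ (1 - t) * ‖c‖ := mul_le_mul (by linarith) hclo (by norm_num) (by linarith)
  have hβ0 : β ≠ 0 := by
    rintro rfl; norm_num at hβlo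
  refine ⟨hβ0, by rw [hβn]; linarith [mul_nonneg ht hc0], ?_, ?_, ?_⟩
  · rw [norm_inv]
    exact inv_le_of_inv_le₀ (by norm_num) (by linarith)
  · have e : h - β • h0 = (h - c • h0) + ((t : ℂ) * c) • h0 := by
      rw [hβ]; push_cast; module
    have := norm_add_le (h - c • h0) (((t : ℂ) * c) • h0)
    rw [← e, norm_smul, norm_mul, hh0, Complex.norm_real, Real.norm_of_nonneg ht] at this
    have h3 : t * ‖c‖ * r ≤ t * 2 * r := by gcongr
    nlinarith [mul_nonneg hD hr.le]
  · have hcb : conj β ≠ 0 := by simpa using hβ0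
    have e : conj β • (x - (conj β)⁻¹ • x0) = (conj c • x - x0) - ((t : ℂ) * conj c) • x := by
      rw [smul_sub, smul_smul, mul_inv_cancel₀ hcb, hβ]
      simp only [map_mul, Complex.conj_ofReal]
      push_cast; module
    have := norm_sub_le (conj c • x - x0) (((t : ℂ) * conj c) • x)
    rw [← e, norm_smul, norm_smul, norm_mul, RCLike.norm_conj, RCLike.norm_conj,
      Complex.norm_real, Real.norm_of_nonneg ht, mul_assoc] at this
    have h3 : t * (‖c‖ * ‖x‖) ≤ t * (16 / 15 * r) :=
      mul_le_mul_of_nonneg_left (hup.trans (mul_le_mul_of_nonneg_right (by linarith) hr.le)) ht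
    have h4 := mul_le_mul_of_nonneg_right hβlo (norm_nonneg (x - (conj β)⁻¹ • x0))
    nlinarith [mul_nonneg hD hr.le, mul_nonneg ht hr.le]

end Geometry

/-! ### Coordinate vectors as elements of Euclidean space -/

lemma vnormSq_nonneg {n : ℕ} (v : Fin n → ℂ) : 0 ≤ vnormSq v :=
  Finset.sum_nonneg fun _ _ => sq_nonneg _

lemma vnorm_nonneg {n : ℕ} (v : Fin n → ℂ) : 0 ≤ vnorm v := Real.sqrt_nonneg _

lemma vnorm_sq {n : ℕ} (v : Fin n → ℂ) : vnorm v ^ 2 = vnormSq v :=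
  Real.sq_sqrt (vnormSq_nonneg v)

lemma vnorm_eq_norm {n : ℕ} (v : Fin n → ℂ) : vnorm v = ‖WithLp.toLp 2 v‖ := by
  rw [EuclideanSpace.norm_eq]; rfl

lemma vinner_eq_inner {n : ℕ} (u v : Fin n → ℂ) :
    vinner u v = inner ℂ (WithLp.toLp 2 u) (WithLp.toLp 2 v) := by
  rw [PiLp.inner_apply]
  exact Finset.sum_congr rfl fun j _ => by simp [mul_comm]

lemma norm_vinner_le {n : ℕ} (u v : Fin n → ℂ) : ‖vinner u v‖ ≤ vnorm u * vnorm v := by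
  rw [vinner_eq_inner, vnorm_eq_norm, vnorm_eq_norm]
  exact norm_inner_le_norm _ _

lemma conj_vinner {n : ℕ} (u v : Fin n → ℂ) : conj (vinner u v) = vinner v u := by
  rw [vinner_eq_inner, vinner_eq_inner, inner_conj_symm]

lemma vinner_self {n : ℕ} (u : Fin n → ℂ) : vinner u u = (vnormSq u : ℂ) := by
  simp only [vinner, vnormSq, Complex.ofReal_sum, Complex.conj_mul', Complex.ofReal_pow]

lemma vinner_add_left {n : ℕ} (u u' v : Fin n → ℂ) :
    vinner (u + u') v = vinner u v + vinner u' v := by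
  simp [vinner, add_mul, Finset.sum_add_distrib]

lemma vinner_sub_right {n : ℕ} (u v v' : Fin n → ℂ) :
    vinner u (v - v') = vinner u v - vinner u v' := by
  simp [vinner, mul_sub, Finset.sum_sub_distrib]

lemma vinner_sub_left {n : ℕ} (u u' v : Fin n → ℂ) :
    vinner (u - u') v = vinner u v - vinner u' v := by
  simp [vinner, sub_mul, Finset.sum_sub_distrib]

lemma vinner_smul_left {n : ℕ} (c : ℂ) (u v : Fin n → ℂ) :
    vinner (c • u) v = conj c * vinner u v := by
  simp [vinner, Finset.mul_sum, mul_assoc]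

lemma vinner_smul_right {n : ℕ} (c : ℂ) (u v : Fin n → ℂ) :
    vinner u (c • v) = c * vinner u v := by
  simp [vinner, Finset.mul_sum, mul_left_comm]

lemma vinner_sum_left {n s : ℕ} (u : Fin s → Fin n → ℂ) (v : Fin n → ℂ) :
    vinner (fun k => ∑ i, u i k) v = ∑ i, vinner (u i) v := by
  simp only [vinner, map_sum, Finset.sum_mul]
  exact Finset.sum_comm

lemma vnorm_smul {n : ℕ} (c : ℂ) (v : Fin n → ℂ) : vnorm (c • v) = ‖c‖ * vnorm v := by
  rw [vnorm_eq_norm, vnorm_eq_norm, WithLp.toLp_smul, norm_smul]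

/-! ### Operator norm -/

lemma frobSq_nonneg {K N : ℕ} (Z : Matrix (Fin K) (Fin N) ℂ) : 0 ≤ frobSq Z :=
  Finset.sum_nonneg fun _ _ => Finset.sum_nonneg fun _ _ => sq_nonneg _

lemma vnorm_mulVec_le_frob {K N : ℕ} (Z : Matrix (Fin K) (Fin N) ℂ) (v : Fin N → ℂ) :
    vnorm (Z.mulVec v) ≤ frob Z * vnorm v := by
  have hrow : ∀ k, ‖Z.mulVec v k‖ ^ 2 ≤ (∑ j, ‖Z k j‖ ^ 2) * vnormSq v := by
    intro k
    have e : Z.mulVec v k = vinner (fun j => conj (Z k j)) v := by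
      simp [Matrix.mulVec, dotProduct, vinner]
    have h1 := norm_vinner_le (fun j => conj (Z k j)) v
    rw [← e] at h1
    have h2 := pow_le_pow_left₀ (norm_nonneg _) h1 2
    rw [mul_pow, vnorm_sq, vnorm_sq] at h2
    simpa [vnormSq] using h2
  rw [vnorm, frob, vnorm, ← Real.sqrt_mul (frobSq_nonneg Z)]
  apply Real.sqrt_le_sqrt
  rw [vnormSq, frobSq, Finset.sum_mul]
  exact Finset.sum_le_sum fun k _ => hrow k

lemma opNorm_nonneg {K N : ℕ} (Z : Matrix (Fin K) (Fin N) ℂ) : 0 ≤ opNorm Z :=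
  Real.sSup_nonneg (by rintro r ⟨v, -, rfl⟩; exact vnorm_nonneg _)

lemma vnorm_mulVec_le {K N : ℕ} (Z : Matrix (Fin K) (Fin N) ℂ) (v : Fin N → ℂ) :
    vnorm (Z.mulVec v) ≤ opNorm Z * vnorm v := by
  have hbdd : BddAbove {r : ℝ | ∃ v : Fin N → ℂ, vnorm v ≤ 1 ∧ r = vnorm (Z.mulVec v)} := by
    refine ⟨frob Z, ?_⟩
    rintro r ⟨w, hw, rfl⟩
    exact (vnorm_mulVec_le_frob Z w).trans (mul_le_of_le_one_right (Real.sqrt_nonneg _) hw)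
  rcases (vnorm_nonneg v).eq_or_lt with h0 | hpos
  · have := vnorm_mulVec_le_frob Z v
    rw [← h0, mul_zero] at this ⊢
    exact this
  · have hn : ‖(((vnorm v)⁻¹ : ℝ) : ℂ)‖ = (vnorm v)⁻¹ := by
      rw [Complex.norm_real, Real.norm_of_nonneg (inv_nonneg.2 hpos.le)]
    have h1 : vnorm (Z.mulVec ((((vnorm v)⁻¹ : ℝ) : ℂ) • v)) ≤ opNorm Z := by
      refine le_csSup hbdd ⟨_, ?_, rfl⟩
      rw [vnorm_smul, hn, inv_mul_cancel₀ hpos.ne']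
    rw [Matrix.mulVec_smul, vnorm_smul, hn, inv_mul_le_iff₀ hpos, mul_comm] at h1
    exact h1

lemma AadjNorm_nonneg {K N L s : ℕ} (b : Fin L → Fin K → ℂ) (a : Fin s → Fin L → Fin N → ℂ)
    (e : Fin L → ℂ) : 0 ≤ AadjNorm b a e :=
  Real.iSup_nonneg fun _ => opNorm_nonneg _

lemma opNorm_calAdj_le {K N L s : ℕ} (b : Fin L → Fin K → ℂ) (a : Fin s → Fin L → Fin N → ℂ)
    (e : Fin L → ℂ) (i : Fin s) : opNorm (calAdj b (a i) e) ≤ AadjNorm b a e :=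
  le_ciSup (f := fun i => opNorm (calAdj b (a i) e)) (Set.finite_range _).bddAbove i

/-- `|u* M v| ≤ ‖u‖ ‖M‖ ‖v‖`. -/
lemma norm_vinner_mulVec_le {K N : ℕ} (M : Matrix (Fin K) (Fin N) ℂ)
    (u : Fin K → ℂ) (v : Fin N → ℂ) :
    ‖vinner u (M.mulVec v)‖ ≤ opNorm M * (vnorm u * vnorm v) := by
  refine (norm_vinner_le _ _).trans ?_
  have := mul_le_mul_of_nonneg_left (vnorm_mulVec_le M v) (vnorm_nonneg u)
  linarith

/-! ### Rank-one matrices -/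

lemma frobSq_rankOne {K N : ℕ} (u : Fin K → ℂ) (v : Fin N → ℂ) :
    frobSq (rankOne u v) = vnormSq u * vnormSq v := by
  simp only [frobSq, rankOne, Matrix.of_apply, norm_mul, RCLike.norm_conj, mul_pow, vnormSq,
    Finset.sum_mul_sum]

lemma frobSq_rankOne_sub {K N : ℕ} (u u' : Fin K → ℂ) (v v' : Fin N → ℂ) :
    frobSq (rankOne u v - rankOne u' v')
      = vnormSq u * vnormSq v + vnormSq u' * vnormSq v'
        - 2 * (vinner u' u * vinner v v').re := by
  have e : vinner u' u * vinner v v'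
      = ∑ k, ∑ j, conj (u' k) * u k * (conj (v j) * v' j) := Finset.sum_mul_sum _ _ _ _
  rw [← frobSq_rankOne, ← frobSq_rankOne, e]
  simp only [Complex.re_sum, Finset.mul_sum, frobSq, ← Finset.sum_add_distrib,
    ← Finset.sum_sub_distrib]
  refine Finset.sum_congr rfl fun k _ => Finset.sum_congr rfl fun j _ => ?_
  simp only [Matrix.sub_apply, rankOne, Matrix.of_apply, ← Complex.normSq_eq_norm_sq,
    Complex.normSq_sub]
  congr 3
  simp only [map_mul, Complex.conj_conj]
  ring

/-! ### The gradient pairing -/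

/-- `u* 𝒜ᵢ*(z) v = ⟨𝒜ᵢ(u v*), z⟩`. -/
lemma vinner_calAdj_mulVec {K N L : ℕ} (b : Fin L → Fin K → ℂ) (a : Fin L → Fin N → ℂ)
    (z : Fin L → ℂ) (u : Fin K → ℂ) (v : Fin N → ℂ) :
    vinner u ((calAdj b a z).mulVec v) = vinner (calAi b a (rankOne u v)) z := by
  have e1 : (calAdj b a z).mulVec v = ∑ l, (z l * vinner (a l) v) • b l := by
    ext k
    simp only [Matrix.mulVec, dotProduct, calAdj, Matrix.of_apply, Finset.sum_mul, vinner,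
      Finset.sum_apply, Pi.smul_apply, smul_eq_mul, Finset.mul_sum]
    rw [Finset.sum_comm]
    exact Finset.sum_congr rfl fun l _ => Finset.sum_congr rfl fun j _ => by ring
  have e2 : ∀ l, calAi b a (rankOne u v) l = vinner (b l) u * conj (vinner (a l) v) := by
    intro l
    have : (rankOne u v).mulVec (a l) = (vinner v (a l)) • u := by
      ext k
      simp only [Matrix.mulVec, dotProduct, rankOne, Matrix.of_apply, vinner, Pi.smul_apply,
        smul_eq_mul, Finset.sum_mul]
      exact Finset.sum_congr rfl fun j _ => by ring
    rw [calAi, this, vinner_smul_right, conj_vinner, mul_comm]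
  rw [e1]
  have e3 : ∀ f : Fin L → Fin K → ℂ, vinner u (∑ l, f l) = ∑ l, vinner u (f l) := by
    intro f
    simp only [vinner, Finset.sum_apply, Finset.mul_sum]
    exact Finset.sum_comm
  rw [e3, vinner]
  refine Finset.sum_congr rfl fun l _ => ?_
  rw [vinner_smul_right, e2, map_mul, Complex.conj_conj, conj_vinner]
  ring

/-- `u* M v` is the pairing of `M* u` with `v`. -/
lemma vinner_conjTranspose_mulVec {K N : ℕ} (M : Matrix (Fin K) (Fin N) ℂ)
    (u : Fin K → ℂ) (v : Fin N → ℂ) :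
    vinner (M.conjTranspose.mulVec u) v = vinner u (M.mulVec v) := by
  simp only [vinner, Matrix.mulVec, dotProduct, Matrix.conjTranspose_apply, map_sum, map_mul,
    Finset.sum_mul, Finset.mul_sum, RCLike.star_def, Complex.conj_conj]
  rw [Finset.sum_comm]
  exact Finset.sum_congr rfl fun k _ => Finset.sum_congr rfl fun j _ => by ring

/-- First-order terms of a bilinear expression, regrouped around the reference point. -/
lemma vinner_mulVec_increments {K N : ℕ} (M : Matrix (Fin K) (Fin N) ℂ)
    (h h0 : Fin K → ℂ) (x x0 : Fin N → ℂ) {α : ℂ} (hα : α ≠ 0) :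
    vinner (h - α • h0) (M.mulVec x) + vinner h (M.mulVec (x - (conj α)⁻¹ • x0))
      = vinner h (M.mulVec x) - vinner h0 (M.mulVec x0)
        + vinner (h - α • h0) (M.mulVec (x - (conj α)⁻¹ • x0)) := by
  have hc : conj α ≠ 0 := by simpa using hα
  simp only [Matrix.mulVec_sub, Matrix.mulVec_smul, vinner_sub_left, vinner_sub_right,
    vinner_smul_left, vinner_smul_right]
  field_simp
  ring

lemma dh_eq {K N s : ℕ} (h0 : Fin s → Fin K → ℂ) (x0 : Fin s → Fin N → ℂ)
    (d0 : Fin s → ℝ) (h : Fin s → Fin K → ℂ) (x : Fin s → Fin N → ℂ) (i : Fin s) :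
    dh h0 x0 d0 h x i = h i - alphaC h0 x0 d0 h x i • h0 i := rfl

lemma calA_sub {K N L s : ℕ} (b : Fin L → Fin K → ℂ) (a : Fin s → Fin L → Fin N → ℂ)
    (Z W : Fin s → Matrix (Fin K) (Fin N) ℂ) :
    calA b a (fun i => Z i - W i) = calA b a Z - calA b a W := by
  ext l
  simp only [calA, calAi, Matrix.sub_mulVec, vinner_sub_right, Finset.sum_sub_distrib,
    Pi.sub_apply]

lemma sum_vinner_calAdj {K N L s : ℕ} (b : Fin L → Fin K → ℂ) (a : Fin s → Fin L → Fin N → ℂ)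
    (u : Fin s → Fin K → ℂ) (v : Fin s → Fin N → ℂ) (z : Fin L → ℂ) :
    ∑ i, vinner (u i) ((calAdj b (a i) z).mulVec (v i)) = vinner (calA b a (Hmap u v)) z := by
  simp only [vinner_calAdj_mulVec]
  exact (vinner_sum_left _ _).symm

/-- The gradient paired with the increments, in terms of the linear measurements. -/
lemma re_gradient_pairing {K N L s : ℕ} (b : Fin L → Fin K → ℂ) (a : Fin s → Fin L → Fin N → ℂ)
    (h0 : Fin s → Fin K → ℂ) (x0 : Fin s → Fin N → ℂ) (d0 : Fin s → ℝ) (e : Fin L → ℂ)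
    (h : Fin s → Fin K → ℂ) (x : Fin s → Fin N → ℂ)
    (hα : ∀ i, alphaC h0 x0 d0 h x i ≠ 0) :
    (∑ i, vinner (gradFh b a h0 x0 e h x i) (dh h0 x0 d0 h x i)
        + ∑ i, vinner (gradFx b a h0 x0 e h x i) (dx h0 x0 d0 h x i)).re
      = vnormSq (calA b a fun i => Hmap h x i - Hmap h0 x0 i)
        + (vinner (calA b a (Hmap (dh h0 x0 d0 h x) (dx h0 x0 d0 h x)))
            (calA b a fun i => Hmap h x i - Hmap h0 x0 i)).re
        - (∑ i, (vinner (h i) ((calAdj b (a i) e).mulVec (x i))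
            - vinner (h0 i) ((calAdj b (a i) e).mulVec (x0 i))
            + vinner (dh h0 x0 d0 h x i)
                ((calAdj b (a i) e).mulVec (dx h0 x0 d0 h x i)))).re := by
  set p := calA b a fun i => Hmap h x i - Hmap h0 x0 i with hp
  set w := calA b a (Hmap (dh h0 x0 d0 h x) (dx h0 x0 d0 h x)) with hw
  have hres : residual b a h0 x0 e h x = p - e := by
    rw [hp, calA_sub]
    ext l
    simp only [residual, yvec, Pi.sub_apply]
    ring
  have key : (∑ i, vinner (gradFh b a h0 x0 e h x i) (dh h0 x0 d0 h x i)
        + ∑ i, vinner (gradFx b a h0 x0 e h x i) (dx h0 x0 d0 h x i)).re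
      = (vinner (p + w) (p - e)).re := by
    have hpair : vinner (p + w) (p - e)
        = ∑ i, vinner (dh h0 x0 d0 h x i)
            ((calAdj b (a i) (residual b a h0 x0 e h x)).mulVec (x i))
          + ∑ i, vinner (h i)
            ((calAdj b (a i) (residual b a h0 x0 e h x)).mulVec (dx h0 x0 d0 h x i)) := by
      rw [vinner_add_left, hw, ← sum_vinner_calAdj, hp, calA_sub, vinner_sub_left,
        ← sum_vinner_calAdj, ← sum_vinner_calAdj, ← calA_sub, ← hp, ← hres,
        ← Finset.sum_sub_distrib, ← Finset.sum_add_distrib, ← Finset.sum_add_distrib]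
      exact Finset.sum_congr rfl fun i _ =>
        (vinner_mulVec_increments _ (h i) (h0 i) (x i) (x0 i) (hα i)).symm
    rw [hpair, Complex.add_re, Complex.add_re]
    congr 1
    · rw [Complex.re_sum, Complex.re_sum]
      refine Finset.sum_congr rfl fun i _ => ?_
      rw [gradFh, ← conj_vinner, Complex.conj_re]
    · simp only [gradFx, vinner_conjTranspose_mulVec]
  rw [key, Finset.sum_add_distrib, Finset.sum_sub_distrib, sum_vinner_calAdj, sum_vinner_calAdj,
    sum_vinner_calAdj, ← vinner_sub_left, ← calA_sub, ← hp, ← hw, ← vinner_add_left,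
    vinner_sub_right, vinner_add_left, vinner_self]
  simp only [Complex.sub_re, Complex.add_re, Complex.ofReal_re]

/-! ### Bounds on a single block -/

lemma frob_nonneg {K N : ℕ} (Z : Matrix (Fin K) (Fin N) ℂ) : 0 ≤ frob Z := Real.sqrt_nonneg _

lemma frob_sq {K N : ℕ} (Z : Matrix (Fin K) (Fin N) ℂ) : frob Z ^ 2 = frobSq Z :=
  Real.sq_sqrt (frobSq_nonneg Z)

/-- Size of the increments for the case-dependent scaling coefficient. -/
lemma block_increment_bounds {K N : ℕ} {d D t : ℝ} (hd : 0 < d)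
    {h h0 : Fin K → ℂ} {x x0 : Fin N → ℂ}
    (hh0 : vnorm h0 = Real.sqrt d) (hx0 : vnorm x0 = Real.sqrt d)
    (hh : vnorm h ≤ 2 * Real.sqrt d) (hx : vnorm x ≤ 2 * Real.sqrt d)
    (hD : 0 ≤ D) (hD' : D ≤ 1 / 15) (ht : 0 ≤ t) (ht' : t ≤ 1 / 150)
    (hfrob : frob (rankOne h x - rankOne h0 x0) = D * d) {α : ℂ}
    (hα : α = if vnorm x ≤ vnorm h then ((1 - t : ℝ) : ℂ) * (vinner h0 h / (d : ℂ))
      else 1 / (((1 - t : ℝ) : ℂ) * conj (vinner x0 x / (d : ℂ)))) :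
    α ≠ 0 ∧ ‖α‖ ≤ 2 ∧
      vnorm (h - α • h0) * vnorm (x - (conj α)⁻¹ • x0) ≤ (D + t) / 5 * d ∧
      vnorm (x - (conj α)⁻¹ • x0) ≤ 3 * (D + t) * Real.sqrt d := by
  set r := Real.sqrt d with hr
  have hr0 : 0 < r := Real.sqrt_pos.2 hd
  have hrd : r ^ 2 = d := Real.sq_sqrt hd.le
  have hQ : frobSq (rankOne h x - rankOne h0 x0) = (D * r ^ 2) ^ 2 := by
    rw [← frob_sq, hfrob, hrd]
  rw [frobSq_rankOne_sub, ← vnorm_sq, ← vnorm_sq, ← vnorm_sq, ← vnorm_sq, hh0, hx0] at hQ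
  have hprod : ∀ u v : ℝ, 0 ≤ u → 0 ≤ v → u ≤ (2.15 * D + 2 * t) * r →
      v ≤ (1.14 * D + 1.22 * t) * r → u * v ≤ (D + t) / 5 * d := by
    intro u v hu hv hu' hv'
    have h1 : u ≤ 0.157 * r := hu'.trans (mul_le_mul_of_nonneg_right (by linarith) hr0.le)
    calc u * v ≤ (0.157 * r) * ((1.14 * D + 1.22 * t) * r) :=
          mul_le_mul h1 hv' hv (by positivity)
      _ = 0.157 * (1.14 * D + 1.22 * t) * d := by rw [← hrd]; ring
      _ ≤ (D + t) / 5 * d := mul_le_mul_of_nonneg_right (by linarith) hd.le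
  by_cases hc : vnorm x ≤ vnorm h
  · rw [if_pos hc] at hα
    simp only [vnorm_eq_norm, vinner_eq_inner, ← hrd] at hh0 hx0 hh hx hQ hc hα
    obtain ⟨h1, h2, -, h4, h5⟩ :=
      increment_bounds hr0 hh0 hx0 hh hc hD hD' ht ht' hQ.le α hα
    rw [← WithLp.toLp_smul, ← WithLp.toLp_sub, ← vnorm_eq_norm] at h4 h5
    exact ⟨h1, h2, hprod _ _ (vnorm_nonneg _) (vnorm_nonneg _) h4 h5,
      h5.trans (mul_le_mul_of_nonneg_right (by linarith) hr0.le)⟩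
  · rw [if_neg hc] at hα
    have hc' : vnorm h ≤ vnorm x := le_of_not_ge hc
    set β : ℂ := ((1 - t : ℝ) : ℂ) * (vinner x0 x / (d : ℂ)) with hβ
    have hαβ : α = (conj β)⁻¹ := by
      rw [hα, hβ, map_mul, Complex.conj_ofReal, one_div]
    have hαβ' : (conj α)⁻¹ = β := by
      rw [hαβ, map_inv₀, Complex.conj_conj, inv_inv]
    have hQ' : vnorm x ^ 2 * vnorm h ^ 2 + r ^ 2 * r ^ 2
        - 2 * (vinner x0 x * vinner h h0).re ≤ (D * r ^ 2) ^ 2 := by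
      rw [← hQ, ← conj_vinner x x0, ← conj_vinner h0 h, ← map_mul, Complex.conj_re,
        mul_comm (vinner x x0), mul_comm (vnorm x ^ 2)]
    rw [hαβ', hαβ]
    clear_value β
    simp only [vnorm_eq_norm, vinner_eq_inner, ← hrd] at hh0 hx0 hh hx hQ' hc' hβ
    obtain ⟨h1, -, h3, h4, h5⟩ :=
      increment_bounds hr0 hx0 hh0 hx hc' hD hD' ht ht' hQ' β hβ
    rw [← WithLp.toLp_smul, ← WithLp.toLp_sub, ← vnorm_eq_norm] at h4 h5
    refine ⟨inv_ne_zero (by simpa using h1), ?_, ?_,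
      h4.trans (mul_le_mul_of_nonneg_right (by linarith) hr0.le)⟩
    · rwa [norm_inv, RCLike.norm_conj, ← norm_inv]
    · rw [mul_comm]
      exact hprod _ _ (vnorm_nonneg _) (vnorm_nonneg _) h4 h5

/-- A difference of two rank-one matrices pairs with `M` at a cost of `√2 ‖M‖` times its
Frobenius norm. -/
lemma norm_vinner_mulVec_sub_le {K N : ℕ} (M : Matrix (Fin K) (Fin N) ℂ) {d : ℝ} (hd : 0 < d)
    {h h0 : Fin K → ℂ} {x x0 : Fin N → ℂ}
    (hh0 : vnorm h0 = Real.sqrt d) (hx0 : vnorm x0 = Real.sqrt d) :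
    ‖vinner h (M.mulVec x) - vinner h0 (M.mulVec x0)‖
      ≤ opNorm M * (Real.sqrt 2 * frob (rankOne h x - rankOne h0 x0)) := by
  set r := Real.sqrt d with hr
  have hr0 : 0 < r := Real.sqrt_pos.2 hd
  set c : ℂ := vinner h0 h / ((r ^ 2 : ℝ) : ℂ) with hc
  have hsplit : vnorm (h - c • h0) ^ 2 * vnorm x ^ 2 + r ^ 2 * vnorm (conj c • x - x0) ^ 2
      = frob (rankOne h x - rankOne h0 x0) ^ 2 := by
    rw [frob_sq, frobSq_rankOne_sub, ← vnorm_sq, ← vnorm_sq, ← vnorm_sq, ← vnorm_sq, hh0, hx0]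
    simp only [vnorm_eq_norm, vinner_eq_inner, WithLp.toLp_smul, WithLp.toLp_sub]
      at hh0 hx0 hc ⊢
    exact orthogonal_split hr0 hh0 hx0 c hc
  have e : vinner h (M.mulVec x) - vinner h0 (M.mulVec x0)
      = vinner (h - c • h0) (M.mulVec x) + vinner h0 (M.mulVec (conj c • x - x0)) := by
    simp only [Matrix.mulVec_sub, Matrix.mulVec_smul, vinner_sub_left, vinner_sub_right,
      vinner_smul_left, vinner_smul_right]
    ring
  have h1 := norm_vinner_mulVec_le M (h - c • h0) x
  have h2 := norm_vinner_mulVec_le M h0 (conj c • x - x0)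
  rw [hh0] at h2
  have h3 : vnorm (h - c • h0) * vnorm x + r * vnorm (conj c • x - x0)
      ≤ Real.sqrt 2 * frob (rankOne h x - rankOne h0 x0) := by
    apply abs_le_of_sq_le_sq' _ (mul_nonneg (Real.sqrt_nonneg _) (frob_nonneg _)) |>.2
    rw [mul_pow, Real.sq_sqrt (by norm_num), ← hsplit]
    nlinarith [sq_nonneg (vnorm (h - c • h0) * vnorm x - r * vnorm (conj c • x - x0))]
  rw [e]
  calc _ ≤ _ := norm_add_le _ _
    _ ≤ opNorm M * (vnorm (h - c • h0) * vnorm x + r * vnorm (conj c • x - x0)) := by linarith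
    _ ≤ _ := mul_le_mul_of_nonneg_left h3 (opNorm_nonneg M)

/-! ### Aggregation over the blocks -/

lemma famFrobSq_nonneg {K N s : ℕ} (Z : Fin s → Matrix (Fin K) (Fin N) ℂ) : 0 ≤ famFrobSq Z :=
  Finset.sum_nonneg fun _ _ => frobSq_nonneg _

lemma dtot_pos {s : ℕ} (hs : 0 < s) {d0 : Fin s → ℝ} (hd : ∀ i, 0 < d0 i) : 0 < dtot d0 := by
  have : Nonempty (Fin s) := ⟨⟨0, hs⟩⟩
  exact Real.sqrt_pos.2 (Finset.sum_pos (fun i _ => pow_pos (hd i) 2) Finset.univ_nonempty)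

lemma dtot_sq {s : ℕ} (d0 : Fin s → ℝ) : dtot d0 ^ 2 = ∑ i, d0 i ^ 2 :=
  Real.sq_sqrt (Finset.sum_nonneg fun _ _ => sq_nonneg _)

/-- `‖𝒜(ℋ(u,v))‖` for small, incoherent rank-one blocks. -/
lemma vnorm_calA_Hmap_le {K N L s : ℕ} (hL : 0 < L) {b : Fin L → Fin K → ℂ}
    {a : Fin s → Fin L → Fin N → ℂ} (hrank : RankOneBound b a) {μ S : ℝ} (hS : 0 ≤ S)
    (hLlarge : 10 ^ 6 * μ ^ 2 * (s : ℝ) * ((K : ℝ) + (N : ℝ)) * Real.log L ^ 2 ≤ (L : ℝ))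
    {u : Fin s → Fin K → ℂ} {v : Fin s → Fin N → ℂ}
    (hW : famFrobSq (Hmap u v) ≤ 0.081 * S ^ 2)
    (hσ : (L : ℝ) * sigmaMaxSq b u v ≤ 655 * μ ^ 2 * S ^ 2) :
    vnorm (calA b a (Hmap u v)) ≤ 0.4 * S := by
  have hL0 : (0 : ℝ) < L := by exact_mod_cast hL
  have hlog : 0 ≤ Real.log L := Real.log_natCast_nonneg L
  set M : ℝ := (s : ℝ) * ((K : ℝ) + N) with hM
  have hM0 : 0 ≤ M := by positivity
  have hσ0 : 0 ≤ sigmaMaxSq b u v := Real.iSup_nonneg fun l =>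
    Finset.sum_nonneg fun i _ => mul_nonneg (sq_nonneg _) (vnormSq_nonneg _)
  have hlarge : 655 * μ ^ 2 * M * Real.log L ≤ L / 1000 := by
    rcases Nat.lt_or_ge L 2 with h1 | h2
    · have : L = 1 := by omega
      subst this; norm_num
    · have hl2 : 0.69 ≤ Real.log L := by
        have := Real.log_le_log (by norm_num) (show (2 : ℝ) ≤ L by exact_mod_cast h2)
        linarith [Real.log_two_gt_d9]
      have : 0 ≤ μ ^ 2 * M * Real.log L := by positivity
      have h3 := mul_le_mul_of_nonneg_left hl2 this
      have h4 : 10 ^ 6 * (μ ^ 2 * M * Real.log L * Real.log L) ≤ L := by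
        rw [hM]; convert hLlarge using 1; ring
      linarith
  set q : ℝ := sigmaMaxSq b u v * M * Real.log L with hq
  have hq0 : 0 ≤ q := by positivity
  have hqS : q ≤ S ^ 2 / 1000 := by
    have h1 := mul_le_mul_of_nonneg_right hσ (mul_nonneg hM0 hlog)
    have h2 := mul_le_mul_of_nonneg_right hlarge (sq_nonneg S)
    have h3 : (L : ℝ) * q ≤ L * (S ^ 2 / 1000) := by
      rw [hq]; linarith
    exact le_of_mul_le_mul_left h3 hL0
  have hmain := hrank u v
  have e1 : 2 * (s : ℝ) * famFrobSq (Hmap u v) * sigmaMaxSq b u v * ((K : ℝ) + N) * Real.log L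
      = 2 * famFrobSq (Hmap u v) * q := by rw [hq, hM]; ring
  have e2 : 8 * (s : ℝ) * sigmaMaxSq b u v * ((K : ℝ) + N) * Real.log L = 8 * q := by
    rw [hq, hM]; ring
  rw [e1, e2] at hmain
  have hsqrt : Real.sqrt (2 * famFrobSq (Hmap u v) * q) ≤ 0.013 * S ^ 2 := by
    apply Real.sqrt_le_iff.2 ⟨by positivity, ?_⟩
    have := mul_le_mul hW hqS hq0 (by positivity)
    nlinarith [sq_nonneg (S ^ 2)]
  rw [vnorm]
  apply Real.sqrt_le_iff.2 ⟨by positivity, ?_⟩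
  nlinarith [sq_nonneg S]

/-- local regularity for `F`. -/
theorem statement12 :
    ∃ C : ℝ, 0 < C ∧
      ∀ (K N L s : ℕ), 0 < K → 0 < N → 0 < L → 0 < s →
      ∀ b : Fin L → Fin K → ℂ, BtBeqI b → (∀ l, vnormSq (b l) = (K : ℝ) / L) →
      ∀ (a : Fin s → Fin L → Fin N → ℂ)
        (h0 : Fin s → Fin K → ℂ) (x0 : Fin s → Fin N → ℂ) (d0 : Fin s → ℝ),
        (∀ i, 0 < d0 i) → (∀ i, vnorm (h0 i) = Real.sqrt (d0 i)) →
        (∀ i, vnorm (x0 i) = Real.sqrt (d0 i)) →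
      ∀ e : Fin L → ℂ,
      ∀ μ ε : ℝ, 0 < μ → muhLe b h0 μ → 0 < ε → ε ≤ 1 / 15 →
        C * μ ^ 2 * (s : ℝ) * ((K : ℝ) + (N : ℝ)) * Real.log L ^ 2 ≤ (L : ℝ) →
      LocalRIP b a h0 x0 d0 μ ε →
      RankOneBound b a →
      ∀ P : Fin s → Matrix (Fin K) (Fin N) ℂ → Matrix (Fin K) (Fin N) ℂ,
        (∀ i, IsFrobProj (h0 i) (x0 i) (P i)) →
        (∀ Z : Fin s → Matrix (Fin K) (Fin N) ℂ,
          |vnormSq (calA b a fun i => P i (Z i)) - famFrobSq (fun i => P i (Z i))|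
            ≤ 1 / 10 * famFrobSq Z) →
      ∀ (h : Fin s → Fin K → ℂ) (x : Fin s → Fin N → ℂ),
        inNd d0 h x → inNmu b d0 μ h → inNeps h0 x0 d0 ε h x →
          (∑ i, vinner (gradFh b a h0 x0 e h x i) (dh h0 x0 d0 h x i)
            + ∑ i, vinner (gradFx b a h0 x0 e h x i) (dx h0 x0 d0 h x i)).re
          ≥ deltaTot h0 x0 d0 h x ^ 2 * dtot d0 ^ 2 / 8
            - 2 * Real.sqrt s * deltaTot h0 x0 d0 h x * dtot d0 * AadjNorm b a e := by
  refine ⟨10 ^ 6, by norm_num, ?_⟩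
  intro K N L s _ _ hL hs b _ _ a h0 x0 d0 hd hh0 hx0 e μ ε hμ hμh _ hε hLlarge hRIP hrank
    _ _ _ h x hNd hNμ hNε
  have hdt : 0 < dtot d0 := dtot_pos hs hd
  have hL0 : (0 : ℝ) < L := by exact_mod_cast hL
  set δ := deltaTot h0 x0 d0 h x with hδ
  set D : Fin s → ℝ := fun i => deltaI (h0 i) (x0 i) (d0 i) (h i) (x i) with hDdef
  set S : ℝ := δ * dtot d0 with hSdef
  have hfrob : ∀ i, frob (rankOne (h i) (x i) - rankOne (h0 i) (x0 i)) = D i * d0 i := fun i => by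
    simp only [hDdef, deltaI]
    exact (div_mul_cancel₀ _ (hd i).ne').symm
  have hD0 : ∀ i, 0 ≤ D i := fun i => div_nonneg (frob_nonneg _) (hd i).le
  have hD1 : ∀ i, D i ≤ 1 / 15 := fun i => (hNε i).trans hε
  have hδ0 : 0 ≤ δ := div_nonneg (Real.sqrt_nonneg _) hdt.le
  have hS0 : 0 ≤ S := mul_nonneg hδ0 hdt.le
  have hSq : famFrobSq (fun i => Hmap h x i - Hmap h0 x0 i) = S ^ 2 := by
    rw [hSdef, hδ, deltaTot, div_mul_cancel₀ _ hdt.ne']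
    exact (Real.sq_sqrt (famFrobSq_nonneg _)).symm
  have hSsum : ∑ i, (D i * d0 i) ^ 2 = S ^ 2 := by
    rw [← hSq, famFrobSq]
    exact Finset.sum_congr rfl fun i _ => by rw [← hfrob, frob_sq]; rfl
  have hδ1 : δ ≤ 1 / 15 := by
    have h1 : S ^ 2 ≤ (1 / 15 * dtot d0) ^ 2 := by
      rw [← hSsum, mul_pow, dtot_sq, Finset.mul_sum]
      refine Finset.sum_le_sum fun i _ => ?_
      rw [mul_pow]
      exact mul_le_mul_of_nonneg_right (pow_le_pow_left₀ (hD0 i) (hD1 i) 2) (sq_nonneg _)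
    have h2 := (abs_le_of_sq_le_sq' h1 (by positivity)).2
    exact le_of_mul_le_mul_right h2 hdt
  set t : ℝ := delta0 h0 x0 d0 h x with ht
  have htδ : t = δ / 10 := rfl
  have ht0 : 0 ≤ t := by rw [htδ]; linarith
  have ht1 : t ≤ 1 / 150 := by rw [htδ]; linarith
  have htsum : ∑ i, (t * d0 i) ^ 2 = S ^ 2 / 100 := by
    simp only [mul_pow, ← Finset.mul_sum]
    rw [← dtot_sq, htδ, hSdef]; ring
  have hblock := fun i => block_increment_bounds (hd i) (hh0 i) (hx0 i) (hNd i).1 (hNd i).2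
    (hD0 i) (hD1 i) ht0 ht1 (hfrob i) (α := alphaC h0 x0 d0 h x i) rfl
  set u := dh h0 x0 d0 h x with hu
  set v := dx h0 x0 d0 h x
  have huv : ∀ i, vnorm (u i) * vnorm (v i) ≤ (D i + t) / 5 * d0 i := fun i => (hblock i).2.2.1
  have hvn : ∀ i, vnorm (v i) ≤ 3 * (D i + t) * Real.sqrt (d0 i) := fun i => (hblock i).2.2.2
  have hDt : ∑ i, ((D i + t) * d0 i) ^ 2 ≤ 2.02 * S ^ 2 := by
    have : ∑ i, ((D i + t) * d0 i) ^ 2 ≤ ∑ i, (2 * (D i * d0 i) ^ 2 + 2 * (t * d0 i) ^ 2) :=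
      Finset.sum_le_sum fun i _ => by nlinarith [sq_nonneg (D i * d0 i - t * d0 i)]
    rw [Finset.sum_add_distrib, ← Finset.mul_sum, ← Finset.mul_sum, hSsum, htsum] at this
    linarith
  have hW : famFrobSq (Hmap u v) ≤ 0.081 * S ^ 2 := by
    have : famFrobSq (Hmap u v) ≤ ∑ i, 1 / 25 * ((D i + t) * d0 i) ^ 2 := by
      refine Finset.sum_le_sum fun i _ => ?_
      rw [Hmap, frobSq_rankOne, ← vnorm_sq, ← vnorm_sq, ← mul_pow]
      calc _ ≤ ((D i + t) / 5 * d0 i) ^ 2 :=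
            pow_le_pow_left₀ (mul_nonneg (vnorm_nonneg _) (vnorm_nonneg _)) (huv i) 2
        _ = _ := by ring
    rw [← Finset.mul_sum] at this
    linarith [sq_nonneg S]
  have hσ : (L : ℝ) * sigmaMaxSq b u v ≤ 655 * μ ^ 2 * S ^ 2 := by
    have hl : Nonempty (Fin L) := ⟨⟨0, hL⟩⟩
    rw [← le_div_iff₀' hL0]
    refine ciSup_le fun l => ?_
    rw [le_div_iff₀' hL0, Finset.mul_sum]
    have hterm : ∀ i, (L : ℝ) * (‖vinner (b l) (u i)‖ ^ 2 * vnormSq (v i))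
        ≤ 324 * μ ^ 2 * ((D i + t) * d0 i) ^ 2 := by
      intro i
      have h1 : Real.sqrt L * ‖vinner (b l) (u i)‖ ≤ 6 * Real.sqrt (d0 i) * μ := by
        have e1 : vinner (b l) (u i)
            = vinner (b l) (h i) - alphaC h0 x0 d0 h x i * vinner (b l) (h0 i) := by
          rw [hu, dh_eq, vinner_sub_right, vinner_smul_right]
        have h2 := norm_sub_le (vinner (b l) (h i))
          (alphaC h0 x0 d0 h x i * vinner (b l) (h0 i))
        rw [← e1, norm_mul] at h2
        have h3 := mul_le_mul_of_nonneg_left h2 (Real.sqrt_nonneg (L : ℝ))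
        have h4 := hμh i l
        rw [hh0 i] at h4
        have h5 := mul_le_mul (hblock i).2.1 h4 (by positivity) (by norm_num)
        linarith [hNμ i l]
      have h2 := pow_le_pow_left₀ (by positivity) h1 2
      have h3 := pow_le_pow_left₀ (vnorm_nonneg _) (hvn i) 2
      rw [vnorm_sq] at h3
      have h4 := mul_le_mul h2 h3 (vnormSq_nonneg _) (by positivity)
      rw [mul_pow, Real.sq_sqrt hL0.le] at h4
      calc _ = (L : ℝ) * ‖vinner (b l) (u i)‖ ^ 2 * vnormSq (v i) := by ring
        _ ≤ _ := h4
        _ = 324 * μ ^ 2 * ((D i + t) ^ 2 * (Real.sqrt (d0 i) ^ 2) ^ 2) := by ring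
        _ = _ := by rw [Real.sq_sqrt (hd i).le]; ring
    calc _ ≤ ∑ i, 324 * μ ^ 2 * ((D i + t) * d0 i) ^ 2 := Finset.sum_le_sum fun i _ => hterm i
      _ ≤ 324 * μ ^ 2 * (2.02 * S ^ 2) := by
        rw [← Finset.mul_sum]
        exact mul_le_mul_of_nonneg_left hDt (by positivity)
      _ ≤ _ := by nlinarith [mul_nonneg (sq_nonneg μ) (sq_nonneg S)]
  have hw := vnorm_calA_Hmap_le hL hrank hS0 hLlarge hW hσ
  have hp := (hRIP h x hNd hNμ hNε).1
  have hnoise : (∑ i, (vinner (h i) ((calAdj b (a i) e).mulVec (x i))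
      - vinner (h0 i) ((calAdj b (a i) e).mulVec (x0 i))
      + vinner (u i) ((calAdj b (a i) e).mulVec (v i)))).re
      ≤ AadjNorm b a e * (2 * Real.sqrt s * S) := by
    have hA := AadjNorm_nonneg b a e
    have hs2 : Real.sqrt 2 ≤ 1.5 := Real.sqrt_le_iff.2 ⟨by norm_num, by norm_num⟩
    have hterm : ∀ i, ‖vinner (h i) ((calAdj b (a i) e).mulVec (x i))
        - vinner (h0 i) ((calAdj b (a i) e).mulVec (x0 i))
        + vinner (u i) ((calAdj b (a i) e).mulVec (v i))‖
        ≤ AadjNorm b a e * (1.7 * (D i * d0 i) + 0.2 * (t * d0 i)) := by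
      intro i
      have h1 := norm_vinner_mulVec_sub_le (calAdj b (a i) e) (hd i) (hh0 i) (hx0 i)
        (h := h i) (x := x i)
      have h2 := norm_vinner_mulVec_le (calAdj b (a i) e) (u i) (v i)
      rw [hfrob i] at h1
      have hDd := mul_nonneg (hD0 i) (hd i).le
      have h3 := mul_le_mul_of_nonneg_right hs2 hDd
      calc _ ≤ _ := norm_add_le _ _
        _ ≤ opNorm (calAdj b (a i) e)
            * (Real.sqrt 2 * (D i * d0 i) + vnorm (u i) * vnorm (v i)) := by linarith
        _ ≤ AadjNorm b a e * (1.7 * (D i * d0 i) + 0.2 * (t * d0 i)) :=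
          mul_le_mul (opNorm_calAdj_le b a e i) (by linarith [huv i])
            (add_nonneg (mul_nonneg (Real.sqrt_nonneg _) hDd)
              (mul_nonneg (vnorm_nonneg _) (vnorm_nonneg _))) hA
    have hcs : ∀ f : Fin s → ℝ, ∀ R : ℝ, 0 ≤ R → ∑ i, f i ^ 2 = R ^ 2 →
        ∑ i, f i ≤ Real.sqrt s * R := by
      intro f R hR hf
      have := sq_sum_le_card_mul_sum_sq (s := Finset.univ) (f := f)
      rw [hf, Finset.card_univ, Fintype.card_fin] at this
      apply abs_le_of_sq_le_sq' _ (by positivity) |>.2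
      rwa [mul_pow, Real.sq_sqrt (Nat.cast_nonneg s)]
    have h1 := hcs (fun i => D i * d0 i) S hS0 hSsum
    have h2 := hcs (fun i => t * d0 i) (S / 10) (by positivity) (by rw [htsum]; ring)
    have hsS : 0 ≤ Real.sqrt s * S := by positivity
    calc _ ≤ _ := Complex.re_le_norm _
      _ ≤ _ := norm_sum_le _ _
      _ ≤ ∑ i, AadjNorm b a e * (1.7 * (D i * d0 i) + 0.2 * (t * d0 i)) :=
        Finset.sum_le_sum fun i _ => hterm i
      _ ≤ _ := by
        rw [← Finset.mul_sum, Finset.sum_add_distrib, ← Finset.mul_sum, ← Finset.mul_sum]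
        exact mul_le_mul_of_nonneg_left (by linarith) hA
  rw [re_gradient_pairing b a h0 x0 d0 e h x fun i => (hblock i).1]
  set p := calA b a fun i => Hmap h x i - Hmap h0 x0 i
  rw [hSq, ← vnorm_sq] at hp
  have hpS : 0.8 * S ≤ vnorm p := by
    apply abs_le_of_sq_le_sq' _ (vnorm_nonneg _) |>.2
    nlinarith [sq_nonneg S]
  have hcross : -(0.4 * S * vnorm p) ≤ (vinner (calA b a (Hmap u v)) p).re := by
    have h1 := (abs_le.1 ((Complex.abs_re_le_norm _).trans
      (norm_vinner_le (calA b a (Hmap u v)) p))).1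
    linarith [mul_le_mul_of_nonneg_right hw (vnorm_nonneg p)]
  have hfin : S ^ 2 / 8 ≤ vnorm p ^ 2 - 0.4 * S * vnorm p := by
    nlinarith [mul_nonneg (sub_nonneg.2 hpS) hS0, mul_nonneg (sub_nonneg.2 hpS) (vnorm_nonneg p)]
  rw [← vnorm_sq, ge_iff_le]
  have e1 : δ ^ 2 * dtot d0 ^ 2 / 8 - 2 * Real.sqrt s * δ * dtot d0 * AadjNorm b a e
      = S ^ 2 / 8 - AadjNorm b a e * (2 * Real.sqrt s * S) := by rw [hSdef]; ring
  rw [e1]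
  linarith

end RGD
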